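/- Let L be a real symmetric positive semidefinite n×n matrix with Moore–Penrose pseudoinverse M, and let v ∈ ℝⁿ satisfy L·M·v = v. Let M' be the Moore–Penrose pseudoinverse of L + v·vᵀ. Then tr(M) − tr(M') = ‖M·v‖² / (1 + vᵀ·M·v), where ‖·‖ is the Euclidean norm. -/

import Mathlib

open Matrix

/-- `M` is the Moore–Penrose pseudoinverse of `L`. -/
def IsMoorePenroseInv {n : ℕ} (L M : Matrix (Fin n) (Fin n) ℝ) : Prop :=
  L * M * L = L ∧ M * L * M = M ∧ (L * M)ᵀ = L * M ∧ (M * L)ᵀ = M * L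

/-!
If `u` lies in the column space of `A` and `w` in its row space, the Sherman–Morrison formula, with
the inverse of `A` replaced by its pseudoinverse `B`, still gives the pseudoinverse of `A + u wᵀ`:
its products with `A + u wᵀ` are the projections `A * B` and `B * A`, which fix `u` and `w`.
The trace formula is then read off from uniqueness of the pseudoinverse. In the positive
semidefinite case `B = Bᴴ A B` is positive semidefinite too, so the denominator is positive.
-/

/-- `B` is the Moore–Penrose pseudoinverse of `A`, for rectangular matrices over a star ring:
the four Penrose equations, with the conjugate transpose in place of the transpose of
`IsMoorePenroseInv`. -/
structure IsPseudoinverse {m n R : Type*} [Fintype m] [Fintype n] [NonUnitalSemiring R] [StarRing R]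
    (A : Matrix m n R) (B : Matrix n m R) : Prop where
  mul_mul_left : A * B * A = A
  mul_mul_right : B * A * B = B
  isHermitian_mul_left : (A * B).IsHermitian
  isHermitian_mul_right : (B * A).IsHermitian

theorem IsMoorePenroseInv.isPseudoinverse {n : ℕ} {L M : Matrix (Fin n) (Fin n) ℝ}
    (h : IsMoorePenroseInv L M) : IsPseudoinverse L M :=
  let ⟨hLML, hMLM, hLM, hML⟩ := h
  ⟨hLML, hMLM, by rwa [IsHermitian, conjTranspose_eq_transpose_of_trivial],
    by rwa [IsHermitian, conjTranspose_eq_transpose_of_trivial]⟩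

namespace IsPseudoinverse

section StarRing

variable {m n R : Type*} [Fintype m] [Fintype n] [NonUnitalSemiring R] [StarRing R]
  {A : Matrix m n R} {B C : Matrix n m R}

theorem conjTranspose (h : IsPseudoinverse A B) : IsPseudoinverse Aᴴ Bᴴ where
  mul_mul_left := by
    simpa only [conjTranspose_mul, Matrix.mul_assoc] using congr_arg (·ᴴ) h.mul_mul_left
  mul_mul_right := by
    simpa only [conjTranspose_mul, Matrix.mul_assoc] using congr_arg (·ᴴ) h.mul_mul_right
  isHermitian_mul_left := by
    simpa only [conjTranspose_mul] using h.isHermitian_mul_right.conjTranspose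
  isHermitian_mul_right := by
    simpa only [conjTranspose_mul] using h.isHermitian_mul_left.conjTranspose

theorem mul_left_unique (hB : IsPseudoinverse A B) (hC : IsPseudoinverse A C) : A * B = A * C :=
  calc
    A * B = A * C * (A * B) := by rw [← Matrix.mul_assoc, hC.mul_mul_left]
    _ = (A * B * (A * C))ᴴ := by
      rw [conjTranspose_mul, hB.isHermitian_mul_left.eq, hC.isHermitian_mul_left.eq]
    _ = (A * C)ᴴ := by rw [← Matrix.mul_assoc, hB.mul_mul_left]
    _ = A * C := hC.isHermitian_mul_left.eq

theorem mul_right_unique (hB : IsPseudoinverse A B) (hC : IsPseudoinverse A C) : B * A = C * A :=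
  conjTranspose_injective <| by
    simpa only [conjTranspose_mul] using hB.conjTranspose.mul_left_unique hC.conjTranspose

theorem unique (hB : IsPseudoinverse A B) (hC : IsPseudoinverse A C) : B = C :=
  calc
    B = B * A * B := hB.mul_mul_right.symm
    _ = C * A * C := by
      rw [hB.mul_right_unique hC, Matrix.mul_assoc, hB.mul_left_unique hC, ← Matrix.mul_assoc]
    _ = C := hC.mul_mul_right

end StarRing

section Hermitian

variable {n R : Type*} [Fintype n] {A B : Matrix n n R}

theorem isHermitian [NonUnitalSemiring R] [StarRing R] (h : IsPseudoinverse A B)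
    (hA : A.IsHermitian) : B.IsHermitian :=
  unique (A := A) (by simpa only [hA.eq] using h.conjTranspose) h

theorem posSemidef [Ring R] [PartialOrder R] [StarRing R] (h : IsPseudoinverse A B)
    (hA : A.PosSemidef) : B.PosSemidef := by
  have hB : Bᴴ * A * B = B := by rw [(h.isHermitian hA.isHermitian).eq, h.mul_mul_right]
  exact hB ▸ hA.conjTranspose_mul_mul_same B

end Hermitian

end IsPseudoinverse

section RankOneUpdate

variable {m n K : Type*} [Fintype m] [Fintype n] [Field K]

/-- The Sherman–Morrison candidate for the (pseudo)inverse of `A + u wᵀ`, where `B` is the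
(pseudo)inverse of `A`. It is meaningful only if `1 + wᵀ B u ≠ 0`. -/
def shermanMorrison (B : Matrix n m K) (u : m → K) (w : n → K) : Matrix n m K :=
  B - (1 + w ⬝ᵥ B *ᵥ u)⁻¹ • vecMulVec (B *ᵥ u) (w ᵥ* B)

theorem shermanMorrison_transpose (B : Matrix n m K) (u : m → K) (w : n → K) :
    (shermanMorrison B u w)ᵀ = shermanMorrison Bᵀ w u := by
  simp only [shermanMorrison, transpose_sub, transpose_smul, transpose_vecMulVec, mulVec_transpose,
    vecMul_transpose, dotProduct_mulVec, dotProduct_comm u]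

theorem trace_sub_trace_shermanMorrison (B : Matrix n n K) (u w : n → K) :
    B.trace - (shermanMorrison B u w).trace =
      (w ᵥ* B) ⬝ᵥ (B *ᵥ u) / (1 + w ⬝ᵥ B *ᵥ u) := by
  rw [shermanMorrison, trace_sub, sub_sub_cancel, trace_smul, trace_vecMulVec, smul_eq_mul,
    inv_mul_eq_div, dotProduct_comm]

variable {A : Matrix m n K} {B : Matrix n m K} {u : m → K} {w : n → K}

theorem add_vecMulVec_mul_shermanMorrison (hu : A *ᵥ (B *ᵥ u) = u)
    (hne : 1 + w ⬝ᵥ B *ᵥ u ≠ 0) : (A + vecMulVec u w) * shermanMorrison B u w = A * B := by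
  set d := 1 + w ⬝ᵥ B *ᵥ u with hd
  have update_mulVec : (A + vecMulVec u w) *ᵥ (B *ᵥ u) = d • u := by
    rw [add_mulVec, hu, vecMulVec_mulVec, op_smul_eq_smul, hd, add_smul, one_smul]
  calc
    (A + vecMulVec u w) * shermanMorrison B u w
      = A * B + vecMulVec u (w ᵥ* B) - d⁻¹ • vecMulVec (d • u) (w ᵥ* B) := by
        rw [shermanMorrison, Matrix.mul_sub, Matrix.mul_smul, mul_vecMulVec, update_mulVec,
          Matrix.add_mul, vecMulVec_mul]
    _ = A * B := by rw [smul_vecMulVec, inv_smul_smul₀ hne, add_sub_cancel_right]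

theorem shermanMorrison_mul_add_vecMulVec (hw : (w ᵥ* B) ᵥ* A = w)
    (hne : 1 + w ⬝ᵥ B *ᵥ u ≠ 0) : shermanMorrison B u w * (A + vecMulVec u w) = B * A := by
  have hw' : Aᵀ *ᵥ (Bᵀ *ᵥ w) = w := by rwa [mulVec_transpose, mulVec_transpose]
  have hne' : 1 + u ⬝ᵥ Bᵀ *ᵥ w ≠ 0 := by
    rwa [mulVec_transpose, dotProduct_comm, ← dotProduct_mulVec]
  apply transpose_injective
  simpa only [transpose_mul, transpose_add, transpose_vecMulVec, shermanMorrison_transpose] using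
    add_vecMulVec_mul_shermanMorrison hw' hne'

theorem IsPseudoinverse.add_vecMulVec [StarRing K] (h : IsPseudoinverse A B)
    (hu : A *ᵥ (B *ᵥ u) = u) (hw : (w ᵥ* B) ᵥ* A = w) (hne : 1 + w ⬝ᵥ B *ᵥ u ≠ 0) :
    IsPseudoinverse (A + vecMulVec u w) (shermanMorrison B u w) where
  mul_mul_left := by
    rw [add_vecMulVec_mul_shermanMorrison hu hne, Matrix.mul_add, h.mul_mul_left, mul_vecMulVec,
      ← mulVec_mulVec, hu]
  mul_mul_right := by
    rw [shermanMorrison_mul_add_vecMulVec hw hne, shermanMorrison, Matrix.mul_sub, h.mul_mul_right,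
      Matrix.mul_smul, mul_vecMulVec, ← mulVec_mulVec, hu]
  isHermitian_mul_left := by
    rw [add_vecMulVec_mul_shermanMorrison hu hne]
    exact h.isHermitian_mul_left
  isHermitian_mul_right := by
    rw [shermanMorrison_mul_add_vecMulVec hw hne]
    exact h.isHermitian_mul_right

end RankOneUpdate

theorem star_vecMul_of_isHermitian {n R : Type*} [Fintype n] [NonUnitalSemiring R]
    [StarRing R] {A : Matrix n n R} (hA : A.IsHermitian) (v : n → R) :
    star v ᵥ* A = star (A *ᵥ v) := by
  rw [star_mulVec, hA.eq]

theorem trace_decrease_of_rank_one_update_general {n K : Type*} [Fintype n] [Field K] [StarRing K]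
    {A B B' : Matrix n n K} {u w : n → K} (hB : IsPseudoinverse A B)
    (hu : A *ᵥ (B *ᵥ u) = u) (hw : (w ᵥ* B) ᵥ* A = w) (hne : 1 + w ⬝ᵥ B *ᵥ u ≠ 0)
    (hB' : IsPseudoinverse (A + vecMulVec u w) B') :
    B.trace - B'.trace = (w ᵥ* B) ⬝ᵥ (B *ᵥ u) / (1 + w ⬝ᵥ B *ᵥ u) := by
  rw [hB'.unique (hB.add_vecMulVec hu hw hne), trace_sub_trace_shermanMorrison]

theorem IsPseudoinverse.trace_sub_trace_of_posSemidef {n K : Type*} [Fintype n] [Field K]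
    [PartialOrder K] [StarRing K] [StarOrderedRing K] {A B B' : Matrix n n K} {v : n → K}
    (hB : IsPseudoinverse A B) (hA : A.PosSemidef) (hv : A *ᵥ (B *ᵥ v) = v)
    (hB' : IsPseudoinverse (A + vecMulVec v (star v)) B') :
    B.trace - B'.trace = star (B *ᵥ v) ⬝ᵥ (B *ᵥ v) / (1 + star v ⬝ᵥ B *ᵥ v) := by
  have hBpos : B.PosSemidef := hB.posSemidef hA
  have hrow : star v ᵥ* B = star (B *ᵥ v) := star_vecMul_of_isHermitian hBpos.isHermitian v
  have hstar : (star v ᵥ* B) ᵥ* A = star v := by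
    rw [hrow, star_vecMul_of_isHermitian hA.isHermitian, hv]
  have hpos : 0 < 1 + star v ⬝ᵥ B *ᵥ v :=
    add_pos_of_pos_of_nonneg one_pos (hBpos.dotProduct_mulVec_nonneg v)
  rw [trace_decrease_of_rank_one_update_general hB hv hstar hpos.ne' hB', hrow]

theorem trace_decrease_of_rank_one_update {n : ℕ}
    (L M M' : Matrix (Fin n) (Fin n) ℝ) (hL : L.PosSemidef)
    (hM : IsMoorePenroseInv L M)
    (v : Fin n → ℝ) (hv : L.mulVec (M.mulVec v) = v)
    (hM' : IsMoorePenroseInv (L + vecMulVec v v) M') :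
    M.trace - M'.trace =
      (∑ i, (M.mulVec v i) ^ 2) / (1 + v ⬝ᵥ M.mulVec v) := by
  simpa only [star_trivial, dotProduct, sq] using
    hM.isPseudoinverse.trace_sub_trace_of_posSemidef hL hv hM'.isPseudoinverse
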